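/- If |λ| > (1 + |α|)², then for every θ ∈ ℝ and every E ∈ σ(H_{α,θ,b}), the Lyapunov exponent L(E) is strictly positive. -/

import Mathlib

open scoped Real

/-- The quasi-periodic potential `v(x) = 2λcos(2πx)/(1 - αcos(2πx))`. -/
noncomputable def potV (α lam : ℝ) (x : ℝ) : ℝ :=
  2 * lam * Real.cos (2 * Real.pi * x) / (1 - α * Real.cos (2 * Real.pi * x))

/-- One-step transfer matrix `A(x,z) = [[z - V x, -1],[1,0]]`. -/
noncomputable def tMat (V : ℝ → ℝ) (x : ℝ) (z : ℂ) : Matrix (Fin 2) (Fin 2) ℂ :=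
  !![z - (V x : ℝ), -1; 1, 0]

/-- The `n`-step transfer matrix `A_n(x,z) = A(x+(n-1)b,z) ⋯ A(x+b,z) A(x,z)`. -/
noncomputable def tProd (V : ℝ → ℝ) (b : ℝ) (n : ℕ) (x : ℝ) (z : ℂ) :
    Matrix (Fin 2) (Fin 2) ℂ :=
  (((List.range n).reverse).map (fun j => tMat V (x + (j : ℝ) * b) z)).prod

/-- The operator norm of a 2×2 complex matrix, acting on the Euclidean space `ℂ²`. -/
noncomputable def opNorm2 (M : Matrix (Fin 2) (Fin 2) ℂ) : ℝ :=
  ‖Matrix.toEuclideanCLM (𝕜 := ℂ) M‖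

/-- The Lyapunov exponent `L(z) = lim_n (1/n)∫₀¹ log‖A_n(x,z)‖ dx`; the limit exists and
equals `inf_{n ≥ 1} (1/n)∫₀¹ log‖A_n(x,z)‖ dx` by subadditivity, so we take that as the
definition. -/
noncomputable def lyap (V : ℝ → ℝ) (b : ℝ) (z : ℂ) : ℝ :=
  ⨅ n : ℕ+, ((n : ℝ))⁻¹ * ∫ x in (0:ℝ)..(1:ℝ), Real.log (opNorm2 (tProd V b n x z))

/-- `IsSchrodingerOp V b θ H` says that `H` is the bounded operator on `ℓ²(ℤ)` given by
`(Hu)ₙ = u_{n+1} + u_{n-1} + V(nb+θ)uₙ`. -/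
def IsSchrodingerOp (V : ℝ → ℝ) (b θ : ℝ)
    (H : lp (fun _ : ℤ => ℂ) 2 →L[ℂ] lp (fun _ : ℤ => ℂ) 2) : Prop :=
  ∀ u : lp (fun _ : ℤ => ℂ) 2, ∀ n : ℤ,
    (H u : ∀ _ : ℤ, ℂ) n = (u : ∀ _ : ℤ, ℂ) (n + 1) + (u : ∀ _ : ℤ, ℂ) (n - 1)
      + (V ((n : ℝ) * b + θ) : ℂ) * (u : ∀ _ : ℤ, ℂ) n


lemma aux_jensen (f : ℂ → ℂ) (hf : AnalyticOnNhd ℂ f (Metric.closedBall 0 1)) (h0 : f 0 ≠ 0) :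
    Real.log ‖f 0‖ ≤ Real.circleAverage (fun z => Real.log ‖f z‖) 0 1 := by
  have hf' : AnalyticOnNhd ℂ f (Metric.closedBall 0 |(1:ℝ)|) := by simpa using hf
  rw [AnalyticOnNhd.circleAverage_log_norm one_ne_zero hf' h0]
  have : 0 ≤ ∑ᶠ u, (MeromorphicOn.divisor f (Metric.closedBall 0 |(1:ℝ)|) u : ℝ) *
      Real.log (1 * ‖(0:ℂ) - u‖⁻¹) := by
    apply finsum_nonneg
    intro u
    by_cases hu : u ∈ Metric.closedBall (0:ℂ) |(1:ℝ)|
    · apply mul_nonneg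
      · exact_mod_cast MeromorphicOn.AnalyticOnNhd.divisor_nonneg hf' u
      · by_cases hz : u = 0
        · simp [hz]
        · apply Real.log_nonneg
          simp only [zero_sub, norm_neg, one_mul]
          apply (one_le_inv₀ (by simpa using hz)).2
          simpa using hu
    · rw [Function.locallyFinsuppWithin.apply_eq_zero_of_notMem _ hu]; simp
  linarith

lemma aux_jensen_int (f : ℂ → ℂ) (hf : AnalyticOnNhd ℂ f (Metric.closedBall 0 1)) (h0 : f 0 ≠ 0)
    (h : ℝ → ℝ) (hc : Continuous h)
    (hle : ∀ x : ℝ, Real.log ‖f (circleMap 0 1 (2 * Real.pi * x))‖ ≤ h x) :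
    Real.log ‖f 0‖ ≤ ∫ x in (0:ℝ)..1, h x := by
  refine (aux_jensen f hf h0).trans ?_
  have hpi : (2 * Real.pi) ≠ 0 := by positivity
  have e1 : ∫ x in (0:ℝ)..1, h x = (2 * Real.pi)⁻¹ * ∫ t in (0:ℝ)..(2 * Real.pi), h (t / (2 * Real.pi)) := by
    rw [intervalIntegral.integral_comp_div _ hpi]
    rw [zero_div, div_self hpi, smul_eq_mul, inv_mul_cancel_left₀ hpi]
  rw [e1, Real.circleAverage_def, smul_eq_mul]
  refine mul_le_mul_of_nonneg_left ?_ (by positivity)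
  apply intervalIntegral.integral_mono (by positivity)
  · have : CircleIntegrable (fun z => Real.log ‖f z‖) 0 1 := by
      apply MeromorphicOn.circleIntegrable_log_norm
      intro z hz
      exact (hf z (by simpa using Metric.sphere_subset_closedBall hz)).meromorphicAt
    exact this
  · apply Continuous.intervalIntegrable
    fun_prop
  · intro t
    have := hle (t / (2 * Real.pi))
    rwa [mul_div_cancel₀ _ hpi] at this

lemma aux_quad (t β : ℝ) (hβ : |β| < 1) (ht : 1 + β ^ 2 < |t|) :
    ∃ μ : ℝ, μ ^ 2 + t * μ + β ^ 2 = 0 ∧ 1 < |μ| := by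
  have hb : β ^ 2 < 1 := by rw [sq_lt_one_iff_abs_lt_one]; exact hβ
  have key : ∀ s : ℝ, 1 + β ^ 2 < s → ∃ μ : ℝ, μ ^ 2 - s * μ + β ^ 2 = 0 ∧ 1 < μ := by
    intro s hs
    have hd : (1 - β ^ 2) ^ 2 < s ^ 2 - 4 * β ^ 2 := by nlinarith [sq_nonneg β]
    have h1 : 1 - β ^ 2 < Real.sqrt (s ^ 2 - 4 * β ^ 2) := Real.lt_sqrt_of_sq_lt hd
    have h2 := Real.sq_sqrt (show 0 ≤ s ^ 2 - 4 * β ^ 2 by nlinarith [sq_nonneg (1 - β ^ 2)])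
    refine ⟨(s + Real.sqrt (s ^ 2 - 4 * β ^ 2)) / 2, ?_, by linarith⟩
    nlinarith
  rcases le_or_gt 0 t with h | h
  · rw [abs_of_nonneg h] at ht
    obtain ⟨μ, h1, h2⟩ := key t ht
    refine ⟨-μ, by linarith [h1, show (-μ)^2 = μ^2 by ring], ?_⟩
    rw [abs_neg]; exact h2.trans_le (le_abs_self _)
  · rw [abs_of_neg h] at ht
    obtain ⟨μ, h1, h2⟩ := key (-t) ht
    exact ⟨μ, by linarith, h2.trans_le (le_abs_self _)⟩

lemma aux_opNorm_apply (M : Matrix (Fin 2) (Fin 2) ℂ) (a b : ℂ) :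
    ‖M 0 0 * a + M 0 1 * b‖ ^ 2 + ‖M 1 0 * a + M 1 1 * b‖ ^ 2 ≤
      opNorm2 M ^ 2 * (‖a‖ ^ 2 + ‖b‖ ^ 2) := by
  have h := (Matrix.toEuclideanCLM (𝕜 := ℂ) M).le_opNorm (WithLp.toLp 2 ![a, b])
  have h2 := pow_le_pow_left₀ (norm_nonneg _) h 2
  rw [mul_pow, EuclideanSpace.norm_sq_eq, EuclideanSpace.norm_sq_eq] at h2
  simpa [Matrix.mulVec, dotProduct, Fin.sum_univ_two, opNorm2] using h2

lemma aux_one_le (M : Matrix (Fin 2) (Fin 2) ℂ) (hM : M.det = 1) : 1 ≤ opNorm2 M := by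
  have h0 : 0 ≤ opNorm2 M := norm_nonneg _
  have h1 := aux_opNorm_apply M 1 0
  have h2 := aux_opNorm_apply M 0 1
  simp only [mul_one, mul_zero, add_zero, zero_add, norm_one, norm_zero] at h1 h2
  have h3 : (1:ℝ) ≤ ‖M 0 0‖ * ‖M 1 1‖ + ‖M 0 1‖ * ‖M 1 0‖ := by
    rw [Matrix.det_fin_two] at hM
    calc (1:ℝ) = ‖M 0 0 * M 1 1 - M 0 1 * M 1 0‖ := by rw [hM]; simp
      _ ≤ _ := by rw [← norm_mul, ← norm_mul]; exact norm_sub_le _ _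
  nlinarith [sq_nonneg (‖M 0 0‖ - ‖M 1 1‖), sq_nonneg (‖M 0 1‖ - ‖M 1 0‖)]

lemma aux_quadform (M : Matrix (Fin 2) (Fin 2) ℂ) (a b : ℝ) :
    ‖(a:ℂ) * (M 0 0 * a + M 0 1 * b) + b * (M 1 0 * a + M 1 1 * b)‖ ≤
      opNorm2 M * (a ^ 2 + b ^ 2) := by
  have h0 : 0 ≤ opNorm2 M := norm_nonneg _
  have h := aux_opNorm_apply M a b
  set X := M 0 0 * (a:ℂ) + M 0 1 * b
  set Y := M 1 0 * (a:ℂ) + M 1 1 * b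
  have h1 : ‖(a:ℂ) * X + b * Y‖ ≤ |a| * ‖X‖ + |b| * ‖Y‖ := by
    refine (norm_add_le _ _).trans ?_
    simp
  simp only [Complex.norm_real, Real.norm_eq_abs, sq_abs] at h
  refine h1.trans ?_
  refine (sq_le_sq₀ (by positivity) (by positivity)).1 ?_
  have : (|a| * ‖X‖ + |b| * ‖Y‖) ^ 2 ≤ (a ^ 2 + b ^ 2) * (‖X‖ ^ 2 + ‖Y‖ ^ 2) := by
    have := sq_nonneg (|a| * ‖Y‖ - |b| * ‖X‖)
    nlinarith [sq_abs a, sq_abs b]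
  refine this.trans ?_
  calc _ ≤ (a ^ 2 + b ^ 2) * (opNorm2 M ^ 2 * (a ^ 2 + b ^ 2)) := by gcongr
    _ = _ := by ring

lemma aux_spec (W : ℤ → ℂ) (δ : ℝ) (hδ : 2 < δ) (E : ℂ) (hW : ∀ n, δ ≤ ‖W n - E‖)
    (H : lp (fun _ : ℤ => ℂ) 2 →L[ℂ] lp (fun _ : ℤ => ℂ) 2)
    (hH : ∀ u : lp (fun _ : ℤ => ℂ) 2, ∀ n : ℤ,
      (H u : ∀ _ : ℤ, ℂ) n = (u : ∀ _ : ℤ, ℂ) (n + 1) + (u : ∀ _ : ℤ, ℂ) (n - 1)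
      + W n * (u : ∀ _ : ℤ, ℂ) n) : E ∉ spectrum ℂ H := by
  have hmem : ∀ (k : ℤ) (u : lp (fun _ : ℤ => ℂ) 2),
      Memℓp (fun n : ℤ => (u : ∀ _ : ℤ, ℂ) (n + k)) 2 := by
    intro k u
    have h := (memℓp_gen_iff (p := 2) (by simp)).1 (lp.memℓp u)
    apply memℓp_gen
    exact ((Equiv.addRight k).summable_iff (f := fun i => ‖(u : ∀ _ : ℤ, ℂ) i‖ ^ (2:ENNReal).toReal)).2 h
  let S : ℤ → lp (fun _ : ℤ => ℂ) 2 →L[ℂ] lp (fun _ : ℤ => ℂ) 2 := fun k =>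
    LinearMap.mkContinuous
      { toFun := fun u => ⟨fun n : ℤ => (u : ∀ _ : ℤ, ℂ) (n + k), hmem k u⟩
        map_add' := fun u v => by ext n; rfl
        map_smul' := fun c u => by ext n; rfl } 1 (by
        intro u
        rw [one_mul]
        apply lp.norm_le_of_tsum_le (by simp) (norm_nonneg _)
        rw [lp.norm_rpow_eq_tsum (by simp)]
        exact ((Equiv.addRight k).tsum_eq (f := fun i => ‖(u : ∀ _ : ℤ, ℂ) i‖ ^ (2:ENNReal).toReal)).le)
  have hS : ∀ k, ‖S k‖ ≤ 1 := fun k => LinearMap.mkContinuous_norm_le _ zero_le_one _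
  have hSa : ∀ k u n, (S k u : ∀ _ : ℤ, ℂ) n = (u : ∀ _ : ℤ, ℂ) (n + k) := fun k u n => rfl
  have hne : ∀ n, W n - E ≠ 0 := fun n h => by
    have := hW n; rw [h, norm_zero] at this; linarith
  have hδ0 : 0 < δ := by linarith
  have hb : ∀ (u : lp (fun _ : ℤ => ℂ) 2) (n : ℤ),
      ‖(W n - E)⁻¹ * (u : ∀ _ : ℤ, ℂ) n‖ ≤ ‖(((δ⁻¹ : ℝ) : ℂ) • u : lp (fun _ : ℤ => ℂ) 2) n‖ := by
    intro u n
    rw [lp.coeFn_smul, Pi.smul_apply, norm_smul, norm_mul, norm_inv]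
    have : ‖W n - E‖⁻¹ ≤ δ⁻¹ := inv_anti₀ hδ0 (hW n)
    have h3 : ‖((δ⁻¹ : ℝ) : ℂ)‖ = δ⁻¹ := by
      rw [Complex.norm_real, Real.norm_eq_abs, abs_of_pos (by positivity)]
    rw [h3]
    gcongr
  have hbm : ∀ u : lp (fun _ : ℤ => ℂ) 2, Memℓp (fun n : ℤ => (W n - E)⁻¹ * (u : ∀ _ : ℤ, ℂ) n) 2 :=
    fun u => Memℓp.mono' (lp.memℓp ((((δ⁻¹ : ℝ) : ℂ) • u : lp (fun _ : ℤ => ℂ) 2))) (hb u)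
  let R : lp (fun _ : ℤ => ℂ) 2 →L[ℂ] lp (fun _ : ℤ => ℂ) 2 :=
    LinearMap.mkContinuous
      { toFun := fun u => ⟨fun n : ℤ => (W n - E)⁻¹ * (u : ∀ _ : ℤ, ℂ) n, hbm u⟩
        map_add' := fun u v => by
          ext n
          exact mul_add _ _ _
        map_smul' := fun c u => by
          ext n
          exact mul_left_comm _ _ _ } δ⁻¹ (by
        intro u
        have := lp.norm_mono (p := 2) (by simp)
          (x := (⟨fun n : ℤ => (W n - E)⁻¹ * (u : ∀ _ : ℤ, ℂ) n, hbm u⟩ : lp (fun _ : ℤ => ℂ) 2))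
          (y := (((δ⁻¹ : ℝ) : ℂ) • u : lp (fun _ : ℤ => ℂ) 2)) (hb u)
        rw [norm_smul, Complex.norm_real, Real.norm_eq_abs,
          abs_of_pos (show 0 < δ⁻¹ by positivity)] at this
        exact this)
  have hR : ‖R‖ ≤ δ⁻¹ := LinearMap.mkContinuous_norm_le _ (by positivity) _
  have hRa : ∀ u n, (R u : ∀ _ : ℤ, ℂ) n = (W n - E)⁻¹ * (u : ∀ _ : ℤ, ℂ) n := fun u n => rfl
  let D : lp (fun _ : ℤ => ℂ) 2 →L[ℂ] lp (fun _ : ℤ => ℂ) 2 :=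
    H - S 1 - S (-1) - algebraMap ℂ _ E
  have hDa : ∀ u n, (D u : ∀ _ : ℤ, ℂ) n = (W n - E) * (u : ∀ _ : ℤ, ℂ) n := by
    intro u n
    have : (D u : ∀ _ : ℤ, ℂ) n = (H u : ∀ _ : ℤ, ℂ) n - (S 1 u : ∀ _ : ℤ, ℂ) n
      - (S (-1) u : ∀ _ : ℤ, ℂ) n - E * (u : ∀ _ : ℤ, ℂ) n := rfl
    rw [this, hH, hSa, hSa, sub_eq_add_neg n 1]
    ring
  have hDR : D * R = 1 := by
    ext u n
    change (D (R u) : ∀ _ : ℤ, ℂ) n = (u : ∀ _ : ℤ, ℂ) n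
    rw [hDa, hRa, mul_inv_cancel_left₀ (hne n)]
  have hRD : R * D = 1 := by
    ext u n
    change (R (D u) : ∀ _ : ℤ, ℂ) n = (u : ∀ _ : ℤ, ℂ) n
    rw [hRa, hDa, inv_mul_cancel_left₀ (hne n)]
  have hDu : IsUnit D := ⟨⟨D, R, hDR, hRD⟩, rfl⟩
  have hlt : ‖-(R * (S 1 + S (-1)))‖ < 1 := by
    rw [norm_neg]
    calc ‖R * (S 1 + S (-1))‖ ≤ ‖R‖ * ‖S 1 + S (-1)‖ := norm_mul_le _ _
      _ ≤ δ⁻¹ * 2 := by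
        gcongr
        exact (norm_add_le _ _).trans (by linarith [hS 1, hS (-1)])
      _ < 1 := by
        rw [inv_mul_lt_iff₀ hδ0]; linarith
  have hU := hDu.mul (isUnit_one_sub_of_norm_lt_one hlt)
  have he : D * (1 - -(R * (S 1 + S (-1)))) = H - algebraMap ℂ _ E := by
    rw [sub_neg_eq_add, mul_add, mul_one, ← mul_assoc, hDR, one_mul]
    simp only [D]
    abel
  rw [he] at hU
  rw [spectrum.notMem_iff]
  have := hU.neg
  rwa [neg_sub] at this

lemma aux_spec2 (α lam b θ : ℝ) (hα : α ∈ Set.Ioo (-1 : ℝ) 1)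
    (hlam : (1 + |α|) ^ 2 < |lam|)
    (H : lp (fun _ : ℤ => ℂ) 2 →L[ℂ] lp (fun _ : ℤ => ℂ) 2)
    (hH : IsSchrodingerOp (potV α lam) b θ H)
    (E : ℝ) (hE : (E : ℂ) ∈ spectrum ℂ H) : 2 < |α * E + 2 * lam| := by
  by_contra hcon
  push Not at hcon
  have ha : |α| < 1 := abs_lt.2 hα
  have ha0 := abs_nonneg α
  by_cases hα0 : α = 0
  · subst hα0
    simp [abs_mul] at hcon hlam
    linarith
  have hap : 0 < |α| := abs_pos.2 hα0
  set m : ℝ := 2 * |lam| / (1 + |α|) with hm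
  have hm2 : 2 * (1 + |α|) < m := by
    rw [hm, lt_div_iff₀ (by positivity)]; nlinarith
  refine aux_spec (fun n => (potV α lam ((n : ℝ) * b + θ) : ℂ)) ((m - 2) / |α|) ?_ E ?_ H hH hE
  · rw [lt_div_iff₀ hap]; linarith
  · intro n
    rw [← Complex.ofReal_sub, Complex.norm_real, Real.norm_eq_abs, div_le_iff₀ hap]
    unfold potV
    set c := Real.cos (2 * Real.pi * ((n : ℝ) * b + θ))
    have hc : |c| ≤ 1 := Real.abs_cos_le_one _
    have hac : |α * c| ≤ |α| := by rw [abs_mul]; nlinarith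
    obtain ⟨h1, h2⟩ := abs_le.1 hac
    have hpos : 0 < 1 - α * c := by linarith
    rw [← abs_mul]
    have e : (2 * lam * c / (1 - α * c) - E) * α = 2 * lam / (1 - α * c) - (α * E + 2 * lam) := by
      have e1 := div_mul_cancel₀ (2 * lam * c) hpos.ne'
      have e2 := div_mul_cancel₀ (2 * lam) hpos.ne'
      apply mul_right_cancel₀ hpos.ne'
      linear_combination α * e1 - e2
    rw [e]
    have h3 : m ≤ |2 * lam / (1 - α * c)| := by
      rw [abs_div, abs_mul, abs_of_pos hpos, abs_two, hm]
      gcongr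
      linarith
    have := abs_sub_abs_le_abs_sub (2 * lam / (1 - α * c)) (α * E + 2 * lam)
    linarith

/-- The rescaled, analytically continued transfer matrix. -/
noncomputable def auxB (E e κ β : ℝ) (w : ℂ) : Matrix (Fin 2) (Fin 2) ℂ :=
  !![((E:ℂ) * w - e * (w ^ 2 + 1) / 2) / (κ * (1 - β * w) ^ 2), -((w - β) / (1 - β * w));
    (w - β) / (1 - β * w), 0]

/-- Products of the rescaled transfer matrices. -/
noncomputable def auxP (E e κ β : ℝ) (ω : ℂ) : ℕ → ℂ → Matrix (Fin 2) (Fin 2) ℂ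
  | 0, _ => 1
  | n + 1, w => auxB E e κ β (w * ω ^ n) * auxP E e κ β ω n w

lemma aux_tProd_zero (V : ℝ → ℝ) (b x : ℝ) (z : ℂ) : tProd V b 0 x z = 1 := by
  simp [tProd]

lemma aux_tProd_succ (V : ℝ → ℝ) (b : ℝ) (n : ℕ) (x : ℝ) (z : ℂ) :
    tProd V b (n + 1) x z = tMat V (x + (n:ℝ) * b) z * tProd V b n x z := by
  simp [tProd, List.range_succ]

lemma aux_tProd_det (V : ℝ → ℝ) (b : ℝ) (n : ℕ) (x : ℝ) (z : ℂ) :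
    (tProd V b n x z).det = 1 := by
  induction n with
  | zero => simp [aux_tProd_zero]
  | succ n ih =>
    rw [aux_tProd_succ, Matrix.det_mul, ih, tMat, Matrix.det_fin_two]
    simp

lemma aux_tProd_cont (V : ℝ → ℝ) (hV : Continuous V) (b : ℝ) (n : ℕ) (z : ℂ) :
    Continuous (fun x => tProd V b n x z) := by
  induction n with
  | zero => simp only [aux_tProd_zero]; exact continuous_const
  | succ n ih =>
    simp only [aux_tProd_succ]
    refine Continuous.matrix_mul ?_ ih
    apply continuous_matrix
    intro i j
    fin_cases i <;> fin_cases j <;> simp [tMat] <;> fun_prop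

lemma aux_opNorm_cont : Continuous opNorm2 := by
  unfold opNorm2
  apply Continuous.norm
  exact LinearMap.continuous_of_finiteDimensional
    (Matrix.toEuclideanCLM (n := Fin 2) (𝕜 := ℂ)).toAlgEquiv.toLinearMap

lemma aux_log_cont (V : ℝ → ℝ) (hV : Continuous V) (b : ℝ) (n : ℕ) (z : ℂ) :
    Continuous (fun x => Real.log (opNorm2 (tProd V b n x z))) := by
  apply Continuous.log (aux_opNorm_cont.comp (aux_tProd_cont V hV b n z))
  intro x
  have := aux_one_le _ (aux_tProd_det V b n x z)
  exact (lt_of_lt_of_le one_pos this).ne'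

lemma aux_one_sub_ne (β : ℝ) (hβ : |β| < 1) (w : ℂ) (hw : ‖w‖ ≤ 1) : 1 - (β:ℂ) * w ≠ 0 := by
  intro h
  have h1 : (β:ℂ) * w = 1 := (sub_eq_zero.1 h).symm
  have h2 : |β| * ‖w‖ = 1 := by
    have := congrArg norm h1
    simpa using this
  nlinarith [abs_nonneg β, norm_nonneg w]

lemma aux_P_analytic (E e κ β : ℝ) (hκ : κ ≠ 0) (hβ : |β| < 1) (ω : ℂ) (hω : ‖ω‖ = 1) (n : ℕ)
    (i j : Fin 2) :
    AnalyticOnNhd ℂ (fun w => auxP E e κ β ω n w i j) (Metric.closedBall 0 1) := by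
  induction n generalizing i j with
  | zero => intro w _; exact analyticAt_const
  | succ n ih =>
    intro w hw
    have hw1 : ‖w‖ ≤ 1 := by simpa using hw
    have hne := aux_one_sub_ne β hβ (w * ω ^ n) (by rw [norm_mul, norm_pow, hω]; simpa using hw1)
    have hκ' : (κ:ℂ) ≠ 0 := by exact_mod_cast hκ
    have hB : ∀ k l, AnalyticAt ℂ (fun w => auxB E e κ β (w * ω ^ n) k l) w := by
      intro k l
      have hne2 : (κ:ℂ) * (1 - β * (w * ω ^ n)) ^ 2 ≠ 0 := mul_ne_zero hκ' (pow_ne_zero _ hne)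
      fin_cases k <;> fin_cases l <;> simp [auxB] <;> fun_prop (disch := assumption)
    simp only [auxP, Matrix.mul_apply, Fin.sum_univ_two]
    exact ((hB i 0).mul (ih 0 j w hw)).add ((hB i 1).mul (ih 1 j w hw))

lemma aux_B_zero (E e κ β μ : ℝ) (hμ : μ ^ 2 + (e / (2 * κ)) * μ + β ^ 2 = 0) :
    (auxB E e κ β 0).mulVec ![(μ:ℂ), -(β:ℂ)] = (μ:ℂ) • ![(μ:ℂ), -(β:ℂ)] := by
  have h : ((μ:ℂ)) ^ 2 + (e / (2 * κ)) * μ + β ^ 2 = 0 := by exact_mod_cast hμ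
  ext i
  fin_cases i
  · simp [auxB, Matrix.mulVec, dotProduct, Fin.sum_univ_two]
    linear_combination -h
  · simp [auxB, Matrix.mulVec, dotProduct, Fin.sum_univ_two]
    ring

lemma aux_P_zero (E e κ β μ : ℝ) (ω : ℂ) (hμ : μ ^ 2 + (e / (2 * κ)) * μ + β ^ 2 = 0) (n : ℕ) :
    (auxP E e κ β ω n 0).mulVec ![(μ:ℂ), -(β:ℂ)] = (μ:ℂ) ^ n • ![(μ:ℂ), -(β:ℂ)] := by
  induction n with
  | zero => simp [auxP]
  | succ n ih =>
    rw [auxP, ← Matrix.mulVec_mulVec, ih, Matrix.mulVec_smul, zero_mul, aux_B_zero _ _ _ _ _ hμ,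
      smul_smul, pow_succ]

lemma aux_B_circle (α lam E κ β : ℝ) (hκ : 0 < κ) (h1 : κ * (1 + β ^ 2) = 1)
    (h2 : 2 * β * κ = α) (hβ : |β| < 1) (y : ℝ) :
    ∃ c : ℂ, ‖c‖ = 1 ∧ auxB E (α * E + 2 * lam) κ β (Complex.exp (2 * Real.pi * y * Complex.I)) =
      c • tMat (potV α lam) y E := by
  set w := Complex.exp (2 * Real.pi * y * Complex.I) with hw
  have hwn : ‖w‖ = 1 := by
    have := Complex.norm_exp_ofReal_mul_I (2 * Real.pi * y)
    push_cast at this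
    exact this
  have hw0 : w ≠ 0 := Complex.exp_ne_zero _
  have hne := aux_one_sub_ne β hβ w hwn.le
  have hconj : (starRingEnd ℂ) w = w⁻¹ := by
    rw [Complex.inv_def, Complex.normSq_eq_norm_sq, hwn]; simp
  have hnorm : ‖w - β‖ = ‖1 - (β:ℂ) * w‖ := by
    have : 1 - (β:ℂ) * w = w * (starRingEnd ℂ) (w - β) := by
      rw [map_sub, hconj, Complex.conj_ofReal]; field_simp
    rw [this, norm_mul, hwn, one_mul, RCLike.norm_conj]
  have hne2 : w - β ≠ 0 := by
    rw [← norm_pos_iff, hnorm, norm_pos_iff]; exact hne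
  have hc : 2 * (Real.cos (2 * Real.pi * y) : ℂ) * w = w ^ 2 + 1 := by
    have h3 : (Real.cos (2 * Real.pi * y) : ℂ) = (w + w⁻¹) / 2 := by
      rw [Complex.ofReal_cos, Complex.cos, hw, ← Complex.exp_neg]
      push_cast
      congr 3
      ring
    rw [h3]; field_simp
  have h1' : (κ:ℂ) * (1 + β ^ 2) = 1 := by exact_mod_cast h1
  have h2' : 2 * (β:ℂ) * κ = α := by exact_mod_cast h2
  have hκ' : (κ:ℂ) ≠ 0 := by exact_mod_cast hκ.ne'
  refine ⟨(w - β) / (1 - β * w), ?_, ?_⟩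
  · rw [norm_div, hnorm, div_self (norm_ne_zero_iff.2 hne)]
  · have hd : w * (1 - (α:ℂ) * (Real.cos (2 * Real.pi * y) : ℂ)) = κ * (1 - β * w) * (w - β) := by
      linear_combination (-α / 2 : ℂ) * hc - w * h1' + (1 + w ^ 2) / 2 * h2'
    have hd0 : 1 - (α:ℂ) * (Real.cos (2 * Real.pi * y) : ℂ) ≠ 0 := by
      intro h
      rw [h, mul_zero] at hd
      exact mul_ne_zero (mul_ne_zero hκ' hne) hne2 hd.symm
    ext i j
    fin_cases i <;> fin_cases j
    · simp only [auxB, tMat, potV, Fin.zero_eta, Matrix.of_apply, Matrix.cons_val', Matrix.cons_val_zero,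
        Matrix.smul_apply, smul_eq_mul]
      push_cast [-Complex.ofReal_cos]
      set C : ℂ := (Real.cos (2 * Real.pi * y) : ℂ)
      have e1 : (E:ℂ) - 2 * lam * C / (1 - α * C) = (E * w - (α * E + 2 * lam) * (w ^ 2 + 1) / 2) /
          (κ * (1 - β * w) * (w - β)) := by
        rw [← hd, ← hc]
        have e2 := div_mul_cancel₀ (2 * lam * C) hd0
        rw [eq_div_iff (mul_ne_zero hw0 hd0)]
        linear_combination -w * e2
      rw [e1]
      field_simp
    · simp [auxB, tMat]
    · simp [auxB, tMat]
    · simp [auxB, tMat]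

lemma aux_P_circle (α lam E κ β b : ℝ) (hκ : 0 < κ) (h1 : κ * (1 + β ^ 2) = 1)
    (h2 : 2 * β * κ = α) (hβ : |β| < 1) (x : ℝ) (n : ℕ) :
    ∃ c : ℂ, ‖c‖ = 1 ∧ auxP E (α * E + 2 * lam) κ β (Complex.exp (2 * Real.pi * b * Complex.I)) n
      (Complex.exp (2 * Real.pi * x * Complex.I)) = c • tProd (potV α lam) b n x E := by
  induction n with
  | zero => exact ⟨1, by simp, by simp [auxP, aux_tProd_zero]⟩
  | succ n ih =>
    obtain ⟨c, hc, ih⟩ := ih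
    obtain ⟨d, hd, hB⟩ := aux_B_circle α lam E κ β hκ h1 h2 hβ (x + n * b)
    refine ⟨d * c, by rw [norm_mul, hc, hd, one_mul], ?_⟩
    have he : Complex.exp (2 * Real.pi * x * Complex.I) *
        Complex.exp (2 * Real.pi * b * Complex.I) ^ n =
        Complex.exp (2 * Real.pi * (x + n * b : ℝ) * Complex.I) := by
      rw [← Complex.exp_nat_mul, ← Complex.exp_add]
      congr 1
      push_cast
      ring
    rw [auxP, ih, he, hB, aux_tProd_succ, Matrix.smul_mul, Matrix.mul_smul, smul_smul]

lemma aux_bound (α lam E κ β b μ : ℝ) (hκ : 0 < κ) (h1 : κ * (1 + β ^ 2) = 1)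
    (h2 : 2 * β * κ = α) (hβ : |β| < 1) (hV : Continuous (potV α lam))
    (hμ : μ ^ 2 + ((α * E + 2 * lam) / (2 * κ)) * μ + β ^ 2 = 0) (hμ1 : 1 < |μ|) (n : ℕ) :
    n * Real.log |μ| ≤ ∫ x in (0:ℝ)..1, Real.log (opNorm2 (tProd (potV α lam) b n x E)) := by
  set ω := Complex.exp (2 * Real.pi * b * Complex.I) with hωd
  have hω : ‖ω‖ = 1 := by
    have := Complex.norm_exp_ofReal_mul_I (2 * Real.pi * b)
    push_cast at this
    exact this
  have hs : 0 < μ ^ 2 + β ^ 2 := by nlinarith [sq_abs μ, sq_nonneg β]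
  set P := auxP E (α * E + 2 * lam) κ β ω n with hP
  let F : ℂ → ℂ := fun w => ((μ:ℂ) * (P w 0 0 * μ + P w 0 1 * (-β : ℝ))
    + (-β : ℝ) * (P w 1 0 * μ + P w 1 1 * (-β : ℝ))) * (((μ ^ 2 + β ^ 2)⁻¹ : ℝ) : ℂ)
  have hF : AnalyticOnNhd ℂ F (Metric.closedBall 0 1) := by
    intro w hw
    have hA := fun i j => aux_P_analytic E (α * E + 2 * lam) κ β hκ.ne' hβ ω hω n i j w hw
    have h00 := hA 0 0
    have h01 := hA 0 1
    have h10 := hA 1 0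
    have h11 := hA 1 1
    simp only [← hP] at h00 h01 h10 h11
    simp only [F]
    fun_prop
  have hF0 : F 0 = (μ:ℂ) ^ n := by
    have h := aux_P_zero E (α * E + 2 * lam) κ β μ ω hμ n
    rw [← hP] at h
    have ha := congrFun h 0
    have hb := congrFun h 1
    simp [Matrix.mulVec, dotProduct, Fin.sum_univ_two] at ha hb
    have hs' : (μ:ℂ) ^ 2 + β ^ 2 ≠ 0 := by exact_mod_cast hs.ne'
    simp only [F]
    push_cast
    field_simp
    linear_combination (μ:ℂ) * ha - (β:ℂ) * hb
  have hμ0 : μ ≠ 0 := by rintro rfl; simp at hμ1; linarith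
  have hFn : Real.log ‖F 0‖ = n * Real.log |μ| := by
    rw [hF0, norm_pow, Complex.norm_real, Real.norm_eq_abs, Real.log_pow]
  rw [← hFn]
  refine aux_jensen_int F hF (by rw [hF0]; exact pow_ne_zero _ (by exact_mod_cast hμ0)) _
    (aux_log_cont _ hV b n E) ?_
  intro x
  obtain ⟨c, hc, hPc⟩ := aux_P_circle α lam E κ β b hκ h1 h2 hβ x n
  have hcm : circleMap 0 1 (2 * Real.pi * x) = Complex.exp (2 * Real.pi * x * Complex.I) := by
    simp [circleMap]
  rw [hcm]
  have h1T := aux_one_le _ (aux_tProd_det (potV α lam) b n x E)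
  have hle : ‖F (Complex.exp (2 * Real.pi * x * Complex.I))‖ ≤
      opNorm2 (tProd (potV α lam) b n x E) := by
    have hq := aux_quadform (tProd (potV α lam) b n x E) μ (-β)
    set M := tProd (potV α lam) b n x E
    rw [← hωd, ← hP] at hPc
    have : F (Complex.exp (2 * Real.pi * x * Complex.I)) =
        c * ((μ:ℂ) * (M 0 0 * μ + M 0 1 * (-β : ℝ)) + (-β : ℝ) * (M 1 0 * μ + M 1 1 * (-β : ℝ)))
          * (((μ ^ 2 + β ^ 2)⁻¹ : ℝ) : ℂ) := by
      simp only [F, hPc, Matrix.smul_apply, smul_eq_mul]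
      ring
    rw [this, norm_mul, norm_mul, hc, one_mul, Complex.norm_real, Real.norm_eq_abs,
      abs_of_pos (inv_pos.2 hs), ← div_eq_mul_inv, div_le_iff₀ hs]
    rwa [neg_sq] at hq
  rcases (norm_nonneg (F (Complex.exp (2 * Real.pi * x * Complex.I)))).eq_or_lt with h | h
  · rw [← h, Real.log_zero]; exact Real.log_nonneg h1T
  · exact Real.log_le_log h hle

/-- if `|λ| > (1+|α|)²`, then for every `θ` and every `E` in the spectrum of
`H_{α,θ,b}`, the Lyapunov exponent `L(E)` is strictly positive. -/
theorem lyapunov_pos_of_large_coupling (α lam b θ : ℝ) (hα : α ∈ Set.Ioo (-1 : ℝ) 1)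
    (hb : Irrational b) (hlam : (1 + |α|) ^ 2 < |lam|)
    (H : lp (fun _ : ℤ => ℂ) 2 →L[ℂ] lp (fun _ : ℤ => ℂ) 2)
    (hH : IsSchrodingerOp (potV α lam) b θ H)
    (E : ℝ) (hE : (E : ℂ) ∈ spectrum ℂ H) :
    0 < lyap (potV α lam) b (E : ℂ) := by
  have he := aux_spec2 α lam b θ hα hlam H hH E hE
  have ha : |α| < 1 := abs_lt.2 hα
  have ha2 : α ^ 2 < 1 := by rw [sq_lt_one_iff_abs_lt_one]; exact ha
  set s := Real.sqrt (1 - α ^ 2) with hsd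
  have hs0 : 0 < s := Real.sqrt_pos.2 (by linarith)
  have hs2 : s ^ 2 = 1 - α ^ 2 := Real.sq_sqrt (by linarith)
  set κ := (1 + s) / 2 with hκd
  set β := α / (1 + s) with hβd
  have hκ : 0 < κ := by positivity
  have h2 : 2 * β * κ = α := by rw [hβd, hκd]; field_simp
  have h1 : κ * (1 + β ^ 2) = 1 := by
    rw [hβd, hκd]; field_simp; linear_combination hs2
  have hβ : |β| < 1 := by
    rw [hβd, abs_div, abs_of_pos (by positivity : 0 < 1 + s), div_lt_one (by positivity)]
    linarith
  have hV : Continuous (potV α lam) := by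
    unfold potV
    refine Continuous.div (by fun_prop) (by fun_prop) ?_
    intro x h
    have hc := Real.abs_cos_le_one (2 * Real.pi * x)
    have h3 : |α * Real.cos (2 * Real.pi * x)| = 1 := by
      rw [show α * Real.cos (2 * Real.pi * x) = 1 by linarith]; simp
    rw [abs_mul] at h3
    nlinarith [abs_nonneg α]
  obtain ⟨μ, hμ, hμ1⟩ := aux_quad ((α * E + 2 * lam) / (2 * κ)) β hβ (by
    rw [abs_div, abs_of_pos (by positivity : 0 < 2 * κ), lt_div_iff₀ (by positivity)]
    linarith)
  refine lt_of_lt_of_le (Real.log_pos hμ1) ?_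
  unfold lyap
  refine le_ciInf fun n => ?_
  have hn : (0:ℝ) < (n:ℕ) := by exact_mod_cast n.pos
  rw [inv_mul_eq_div, le_div_iff₀ hn, mul_comm]
  exact aux_bound α lam E κ β b μ hκ h1 h2 hβ hV hμ hμ1 n
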